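/- arXiv:1910.07304 — 2 statements merged into one kernel-verified Lean document; each statement's English description precedes it below -/
import Mathlib

section
/- Let ω : ℝ → ℝ³ be continuous and let Q : ℝ → M₃(ℝ) be differentiable with Q(0) = I₃, Q'(t) = Q(t)·A(ω(t)) and Q(t)ᵀQ(t) = I₃ for every t. Then for every t ≥ 0, ‖Q(t) − I₃‖_F ≤ √6 · t · sup_{s ∈ [0,t]} |ω(s)|, where ‖·‖_F is the Frobenius norm on 3×3 matrices and |·| the Euclidean norm on ℝ³. -/
open Matrix

noncomputable section

attribute [local instance] Matrix.normedAddCommGroup Matrix.normedSpace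

/-- The skew-symmetric matrix `A(ω)` satisfying `A(ω) v = ω × v`. -/
def Amat (w : EuclideanSpace ℝ (Fin 3)) : Matrix (Fin 3) (Fin 3) ℝ :=
  !![0, -w 2, w 1; w 2, 0, -w 0; -w 1, w 0, 0]

/-- The Frobenius norm of a `3 × 3` real matrix. -/
def frobNorm (M : Matrix (Fin 3) (Fin 3) ℝ) : ℝ :=
  Real.sqrt (∑ i, ∑ j, (M i j) ^ 2)

/-- The squared Frobenius norm as a trace. -/
lemma sum_sq_eq_trace (M : Matrix (Fin 3) (Fin 3) ℝ) :
    ∑ i, ∑ j, (M i j) ^ 2 = (Mᵀ * M).trace := by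
  simp [Matrix.trace, Matrix.mul_apply, Fin.sum_univ_three]
  ring

lemma sum_sq_mul_Amat (P : Matrix (Fin 3) (Fin 3) ℝ) (h : Pᵀ * P = 1)
    (w : EuclideanSpace ℝ (Fin 3)) :
    ∑ i, ∑ j, ((P * Amat w) i j) ^ 2 = 2 * ‖w‖ ^ 2 := by
  have e : (P * Amat w)ᵀ * (P * Amat w) = (Amat w)ᵀ * Amat w := by
    rw [Matrix.transpose_mul, Matrix.mul_assoc, ← Matrix.mul_assoc Pᵀ, h, Matrix.one_mul]
  rw [sum_sq_eq_trace, e, ← sum_sq_eq_trace, EuclideanSpace.norm_sq_eq]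
  simp [Amat, Fin.sum_univ_three]
  ring

/-- A matrix as a vector of the Euclidean space of its entries. -/
def toE (M : Matrix (Fin 3) (Fin 3) ℝ) : EuclideanSpace ℝ (Fin 3 × Fin 3) :=
  WithLp.toLp 2 (fun p => M p.1 p.2)

lemma norm_toE (M : Matrix (Fin 3) (Fin 3) ℝ) : ‖toE M‖ = frobNorm M := by
  rw [EuclideanSpace.norm_eq, frobNorm, Fintype.sum_prod_type]
  simp [toE]

/-- If `Q 0 = I₃`, `Q' t = Q t * A (ω t)` and `Q tᵀ Q t = I₃` for all `t`, then for every
`t ≥ 0`, `‖Q t − I₃‖_F ≤ √6 · t · sup_{s ∈ [0,t]} |ω s|`. -/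
theorem stmt2 (ω : ℝ → EuclideanSpace ℝ (Fin 3)) (hω : Continuous ω)
    (Q : ℝ → Matrix (Fin 3) (Fin 3) ℝ) (hQ0 : Q 0 = 1)
    (hQ' : ∀ t : ℝ, HasDerivAt Q (Q t * Amat (ω t)) t)
    (horth : ∀ t : ℝ, (Q t)ᵀ * Q t = 1) :
    ∀ t : ℝ, 0 ≤ t →
      frobNorm (Q t - 1) ≤ Real.sqrt 6 * t * sSup ((fun s => ‖ω s‖) '' Set.Icc 0 t) := by
  intro t ht
  have hbdd : BddAbove ((fun s => ‖ω s‖) '' Set.Icc 0 t) :=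
    (isCompact_Icc.image hω.norm).bddAbove
  set S := sSup ((fun s => ‖ω s‖) '' Set.Icc 0 t) with hS
  have hder : ∀ x ∈ Set.Icc (0 : ℝ) t,
      HasDerivWithinAt (fun s => toE (Q s)) (toE (Q x * Amat (ω x))) (Set.Icc 0 t) x := by
    intro x _
    apply HasDerivAt.hasDerivWithinAt
    have h1 : HasDerivAt (fun s => (fun p : Fin 3 × Fin 3 => Q s p.1 p.2))
        (fun p => (Q x * Amat (ω x)) p.1 p.2) x := by
      rw [hasDerivAt_pi]
      intro p
      exact hasDerivAt_pi.1 (hasDerivAt_pi.1 (hQ' x) p.1) p.2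
    exact (PiLp.continuousLinearEquiv 2 ℝ
      (fun _ : Fin 3 × Fin 3 => ℝ)).symm.hasFDerivAt.comp_hasDerivAt x h1
  have hb : ∀ x ∈ Set.Ico (0 : ℝ) t, ‖toE (Q x * Amat (ω x))‖ ≤ Real.sqrt 6 * S := by
    intro x hx
    have hle : ‖ω x‖ ≤ S := le_csSup hbdd ⟨x, Set.Ico_subset_Icc_self hx, rfl⟩
    rw [norm_toE, frobNorm, sum_sq_mul_Amat _ (horth x), Real.sqrt_mul (by norm_num),
      Real.sqrt_sq (norm_nonneg _)]
    gcongr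
    norm_num
  have := norm_image_sub_le_of_norm_deriv_le_segment' hder hb t ⟨ht, le_rfl⟩
  have e : toE (Q t) - toE (Q 0) = toE (Q t - 1) := by
    rw [hQ0]; rfl
  rw [e, norm_toE] at this
  linarith
end
end

section
/- Let k_d > 0, T_I > 0, and let k_p : [0,∞) → ℝ be continuously differentiable with 0 ≤ k_p'(s) ≤ k_d/(2T_I²) for all s and k_p'(s) = 0 for all s ≥ T_I. Let h₀, h₁ ∈ ℝ³, let ℓ : [0,∞) → ℝ³ be continuous and set h(t) = h₀ + ∫₀ᵗ ℓ(s) ds. Then for every T > 0: ∫₀ᵀ (k_p'(s)/2)|h₁ − h(s)|² ds ≤ (k_d/(2T_I))·|h₁ − h₀|² + (k_d/2)∫₀ᵀ |ℓ(s)|² ds. -/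
open MeasureTheory

noncomputable section

lemma cs_aux (g : ℝ → ℝ) (hg : Continuous g) (s : ℝ) (hs : 0 ≤ s) :
    (∫ x in (0:ℝ)..s, g x) ^ 2 ≤ s * ∫ x in (0:ℝ)..s, g x ^ 2 := by
  rcases hs.eq_or_lt with rfl | hs'
  · simp
  have key : ∀ c : ℝ, 0 ≤ (∫ x in (0:ℝ)..s, g x ^ 2) - 2 * c * (∫ x in (0:ℝ)..s, g x)
      + c ^ 2 * s := by
    intro c
    have h1 : 0 ≤ ∫ x in (0:ℝ)..s, (g x - c) ^ 2 :=
      intervalIntegral.integral_nonneg hs (fun x _ => sq_nonneg _)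
    have h2 : (∫ x in (0:ℝ)..s, (g x - c) ^ 2) =
        ∫ x in (0:ℝ)..s, ((g x ^ 2 - 2 * c * g x) + c ^ 2) := by
      congr 1; ext x; ring
    rw [h2, intervalIntegral.integral_add, intervalIntegral.integral_sub,
      intervalIntegral.integral_const_mul, intervalIntegral.integral_const] at h1
    · simp only [smul_eq_mul, sub_zero] at h1
      linarith
    all_goals exact Continuous.intervalIntegrable (by fun_prop) _ _
  have h := key ((∫ x in (0:ℝ)..s, g x) / s)
  have h3 := mul_nonneg hs h
  have h4 : s * ((∫ x in (0:ℝ)..s, g x ^ 2)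
      - 2 * ((∫ x in (0:ℝ)..s, g x) / s) * (∫ x in (0:ℝ)..s, g x)
      + ((∫ x in (0:ℝ)..s, g x) / s) ^ 2 * s) =
      s * (∫ x in (0:ℝ)..s, g x ^ 2) - (∫ x in (0:ℝ)..s, g x) ^ 2 := by
    field_simp
    ring
  linarith

/-- Spring-term estimate: under the hypotheses (hypkp) on the time-dependent stiffness `k_p`,
with `h t = h₀ + ∫₀ᵗ ℓ`, for every `T > 0`,
`∫₀ᵀ (k_p'/2)|h₁ − h|² ≤ (k_d/(2T_I))|h₁ − h₀|² + (k_d/2)∫₀ᵀ |ℓ|²`. -/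
theorem stmt5 (kd TI : ℝ) (hkd : 0 < kd) (hTI : 0 < TI)
    (kp kp' : ℝ → ℝ) (hkp : ∀ s : ℝ, HasDerivAt kp (kp' s) s) (hkp'c : Continuous kp')
    (hkp'nonneg : ∀ s : ℝ, 0 ≤ s → 0 ≤ kp' s)
    (hkp'le : ∀ s : ℝ, 0 ≤ s → kp' s ≤ kd / (2 * TI ^ 2))
    (hkp'zero : ∀ s : ℝ, TI ≤ s → kp' s = 0)
    (h₀ h₁ : EuclideanSpace ℝ (Fin 3))
    (ℓ : ℝ → EuclideanSpace ℝ (Fin 3)) (hℓ : Continuous ℓ)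
    (h : ℝ → EuclideanSpace ℝ (Fin 3))
    (hh : ∀ t : ℝ, h t = h₀ + ∫ s in (0:ℝ)..t, ℓ s) :
    ∀ T : ℝ, 0 < T →
      (∫ s in (0:ℝ)..T, (kp' s / 2) * ‖h₁ - h s‖ ^ 2)
        ≤ (kd / (2 * TI)) * ‖h₁ - h₀‖ ^ 2 + (kd / 2) * ∫ s in (0:ℝ)..T, ‖ℓ s‖ ^ 2 := by
  intro T hT
  have hhc : Continuous h := by
    have : h = fun t => h₀ + ∫ s in (0:ℝ)..t, ℓ s := funext hh
    rw [this]
    exact continuous_const.add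
      (intervalIntegral.continuous_primitive (fun a b => hℓ.intervalIntegrable a b) 0)
  have hFc : Continuous (fun s => (kp' s / 2) * ‖h₁ - h s‖ ^ 2) := by fun_prop
  have hm0 : 0 ≤ min T TI := le_min hT.le hTI.le
  have hI0 : 0 ≤ ∫ s in (0:ℝ)..T, ‖ℓ s‖ ^ 2 :=
    intervalIntegral.integral_nonneg hT.le (fun x _ => sq_nonneg _)
  have htail : (∫ s in (min T TI)..T, (kp' s / 2) * ‖h₁ - h s‖ ^ 2) = 0 := by
    rcases le_total T TI with hle | hle
    · rw [min_eq_left hle, intervalIntegral.integral_same]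
    · rw [min_eq_right hle]
      have : (∫ s in TI..T, (kp' s / 2) * ‖h₁ - h s‖ ^ 2) = ∫ s in TI..T, (0:ℝ) := by
        apply intervalIntegral.integral_congr
        intro x hx
        rw [Set.uIcc_of_le hle] at hx
        simp [hkp'zero x hx.1]
      rw [this]; simp
  have hsplit := intervalIntegral.integral_add_adjacent_intervals
    (hFc.intervalIntegrable (μ := volume) 0 (min T TI))
    (hFc.intervalIntegrable (μ := volume) (min T TI) T)
  rw [htail, add_zero] at hsplit
  rw [← hsplit]
  set I := ∫ s in (0:ℝ)..T, ‖ℓ s‖ ^ 2 with hI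
  set C := kd / (4 * TI ^ 2) * (2 * ‖h₁ - h₀‖ ^ 2 + 2 * (TI * I)) with hC
  have hC0 : 0 ≤ C := by positivity
  have hpt : ∀ s ∈ Set.Icc 0 (min T TI), (kp' s / 2) * ‖h₁ - h s‖ ^ 2 ≤ C := by
    intro s hs
    have hsT : s ≤ T := hs.2.trans (min_le_left _ _)
    have hsTI : s ≤ TI := hs.2.trans (min_le_right _ _)
    have e1 : ‖∫ x in (0:ℝ)..s, ℓ x‖ ≤ ∫ x in (0:ℝ)..s, ‖ℓ x‖ :=
      intervalIntegral.norm_integral_le_integral_norm hs.1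
    have e2 := cs_aux (fun x => ‖ℓ x‖) hℓ.norm s hs.1
    have e3 : (∫ x in (0:ℝ)..s, ‖ℓ x‖ ^ 2) ≤ I := by
      apply intervalIntegral.integral_mono_interval le_rfl hs.1 hsT
      · exact Filter.Eventually.of_forall (fun x => sq_nonneg _)
      · exact (hℓ.norm.pow 2).intervalIntegrable _ _
    have e4 : ‖∫ x in (0:ℝ)..s, ℓ x‖ ^ 2 ≤ TI * I := by
      calc ‖∫ x in (0:ℝ)..s, ℓ x‖ ^ 2 ≤ (∫ x in (0:ℝ)..s, ‖ℓ x‖) ^ 2 := by gcongr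
        _ ≤ s * ∫ x in (0:ℝ)..s, ‖ℓ x‖ ^ 2 := e2
        _ ≤ s * I := mul_le_mul_of_nonneg_left e3 hs.1
        _ ≤ TI * I := mul_le_mul_of_nonneg_right hsTI hI0
    have e5 : ‖h₁ - h s‖ ≤ ‖h₁ - h₀‖ + ‖∫ x in (0:ℝ)..s, ℓ x‖ := by
      rw [hh s, ← sub_sub]; exact norm_sub_le _ _
    have e6 : ‖h₁ - h s‖ ^ 2 ≤ 2 * ‖h₁ - h₀‖ ^ 2 + 2 * (TI * I) := by
      have := pow_le_pow_left₀ (norm_nonneg _) e5 2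
      nlinarith [sq_nonneg (‖h₁ - h₀‖ - ‖∫ x in (0:ℝ)..s, ℓ x‖)]
    have e7 : kp' s / 2 ≤ kd / (4 * TI ^ 2) := by
      have := hkp'le s hs.1
      have e : kd / (4 * TI ^ 2) = kd / (2 * TI ^ 2) / 2 := by field_simp; norm_num
      rw [e]; linarith
    exact mul_le_mul e7 e6 (sq_nonneg _) (by positivity)
  have hmono : (∫ s in (0:ℝ)..(min T TI), (kp' s / 2) * ‖h₁ - h s‖ ^ 2)
      ≤ ∫ s in (0:ℝ)..(min T TI), C :=
    intervalIntegral.integral_mono_on hm0 (hFc.intervalIntegrable _ _)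
      (continuous_const.intervalIntegrable _ _) hpt
  rw [intervalIntegral.integral_const, smul_eq_mul, sub_zero] at hmono
  have h5 : min T TI * C ≤ TI * C := mul_le_mul_of_nonneg_right (min_le_right _ _) hC0
  have h6 : TI * C = (kd / (2 * TI)) * ‖h₁ - h₀‖ ^ 2 + (kd / 2) * I := by
    rw [hC]; field_simp; ring
  linarith
end
end
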